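/- Let 0 < r₁ < r₂. There exist a constant c > 0 defining the weight φ(x) := c·e^{‖x‖}, and constants ε > 0, h₀ > 0 and C > 0, such that for every W ∈ C¹(ℝ², ℝ) with sup_{ℝ²}|W| ≤ ε and sup_{ℝ²}‖∇W‖ ≤ ε, every h ∈ (0, h₀] and every u ∈ C_c^∞(A(0,r₁,r₂), ℂ): h ∫_{ℝ²} (|u|² + |h∇u|²) ≤ C ∫_{ℝ²} |e^{φ/h}(−h²Δ + W)(e^{−φ/h}u)|². -/

import Mathlib

open MeasureTheory Metric Set

noncomputable section

abbrev E2 := EuclideanSpace ℝ (Fin 2)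

/-- The `i`-th standard basis vector of ℝ². -/
def basis2 (i : Fin 2) : E2 := EuclideanSpace.single i (1 : ℝ)

/-- Laplacian of a complex-valued function on ℝ². -/
def lapC (u : E2 → ℂ) (x : E2) : ℂ :=
  ∑ i, fderiv ℝ (fun y => fderiv ℝ u y (basis2 i)) x (basis2 i)

/-- Squared Euclidean norm of the gradient of a complex-valued function. -/
def gradSq (u : E2 → ℂ) (x : E2) : ℝ := ∑ i, ‖fderiv ℝ u x (basis2 i)‖ ^ 2

/-- Euclidean norm of the gradient of a real-valued function. -/
def gradNormR (W : E2 → ℝ) (x : E2) : ℝ :=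
  Real.sqrt (∑ i, (fderiv ℝ W x (basis2 i)) ^ 2)

/-- The conjugated Schrödinger operator `e^{φ/h}(−h²Δ + W)(e^{−φ/h} u)`. -/
def opPW (h : ℝ) (φ : E2 → ℝ) (W : E2 → ℝ) (u : E2 → ℂ) (x : E2) : ℂ :=
  (Real.exp (φ x / h) : ℂ) *
    (-(h ^ 2 : ℂ) * lapC (fun y => (Real.exp (-φ y / h) : ℂ) * u y) x +
      (W x : ℂ) * ((Real.exp (-φ x / h) : ℂ) * u x))

/-!
Conjugation by `e^{φ/h}` splits `-h²Δ + W` into a self-adjoint part `A = -h²Δ + W - |∇φ|²` and a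
skew-adjoint part `B = h(2∇φ·∇ + Δφ)`, and `‖Au + Bu‖² ≥ 4⟪Au, Bu⟫` pointwise. The inner product
`⟪Au, Bu⟫` is a divergence, which integrates to zero, plus the form
`2h³ D²φ(∇u, ∇u) + 2h D²φ(∇φ, ∇φ)|u|² + h³⟪u, ∇Δφ·∇u⟫ - h(∇φ·∇W)|u|²`. If `D²φ ≥ m > 0` and
`|∇φ| ≥ δ > 0`, its first two terms control `h(|u|² + |h∇u|²)`; they absorb the third term for small
`h` and the last one for small `∇W`. Since `e^r ≥ max 1 r`, the weight `c e^{‖x‖}` has `D²φ ≥ c` and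
`|∇φ| ≥ c` away from the origin.
-/

open scoped InnerProductSpace Topology

variable {ι : Type*} [Fintype ι] {V : Type*} [NormedAddCommGroup V] [InnerProductSpace ℝ V]

section CompactSupport

lemma integrable_of_continuousAt_of_support_subset {α F : Type*} [TopologicalSpace α] [R1Space α]
    [MeasurableSpace α] [OpensMeasurableSpace α] {μ : Measure α} [IsFiniteMeasureOnCompacts μ]
    [NormedAddCommGroup F] {g : α → F} {K : Set α} (hK : IsCompact K) (hK' : IsClosed K)
    (hg : ∀ x ∈ K, ContinuousAt g x) (hsupp : Function.support g ⊆ K) : Integrable g μ :=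
  (continuous_of_tsupport fun x hx ↦ hg x (closure_minimal hsupp hK' hx))
    |>.integrable_of_hasCompactSupport (HasCompactSupport.of_support_subset_isCompact hK hsupp)

end CompactSupport

section Tuples

lemma norm_sum_smul_le (s : EuclideanSpace ℝ ι) (v : PiLp 2 (fun _ : ι ↦ V)) :
    ‖∑ i, s i • v i‖ ≤ ‖s‖ * ‖v‖ :=
  calc ‖∑ i, s i • v i‖ ≤ ∑ i, ‖s i‖ * ‖v i‖ :=
        (norm_sum_le _ _).trans_eq (Finset.sum_congr rfl fun i _ ↦ norm_smul _ _)
    _ ≤ √(∑ i, ‖s i‖ ^ 2) * √(∑ i, ‖v i‖ ^ 2) := Real.sum_mul_le_sqrt_mul_sqrt _ _ _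
    _ = ‖s‖ * ‖v‖ := by rw [PiLp.norm_eq_of_L2, PiLp.norm_eq_of_L2]

lemma le_sum_mul_inner_of_forall_real {A : ι → ι → ℝ} {m : ℝ}
    (hA : ∀ s : ι → ℝ, m * ∑ i, s i ^ 2 ≤ ∑ i, ∑ j, A i j * (s i * s j)) (v : ι → V) :
    m * ∑ i, ‖v i‖ ^ 2 ≤ ∑ i, ∑ j, A i j * ⟪v i, v j⟫_ℝ := by
  let S := Submodule.span ℝ (range v)
  have : FiniteDimensional ℝ S := FiniteDimensional.span_of_finite ℝ (finite_range v)
  let e := stdOrthonormalBasis ℝ S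
  let s (k) (i : ι) : ℝ := ⟪v i, (e k : V)⟫_ℝ
  have inner_eq (i j : ι) : ⟪v i, v j⟫_ℝ = ∑ k, s k i * s k j := by
    have := e.sum_inner_mul_inner ⟨v i, Submodule.subset_span (mem_range_self i)⟩
      ⟨v j, Submodule.subset_span (mem_range_self j)⟩
    simpa only [s, Submodule.coe_inner, real_inner_comm] using this.symm
  calc m * ∑ i, ‖v i‖ ^ 2 = ∑ k, m * ∑ i, s k i ^ 2 := by
        simp only [← real_inner_self_eq_norm_sq, inner_eq, ← pow_two, ← Finset.mul_sum]
        rw [Finset.sum_comm]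
    _ ≤ ∑ k, ∑ i, ∑ j, A i j * (s k i * s k j) := Finset.sum_le_sum fun k _ ↦ hA (s k)
    _ = ∑ i, ∑ j, A i j * ⟪v i, v j⟫_ℝ := by
        rw [Finset.sum_comm]
        simp only [inner_eq, Finset.mul_sum]
        exact Finset.sum_congr rfl fun i _ ↦ Finset.sum_comm

end Tuples

variable [DecidableEq ι]

/-- The partial derivative `∂ᵢf` on `ℝ^ι`; it is `0` where `f` is not differentiable. -/
def partialDeriv {V : Type*} [NormedAddCommGroup V] [NormedSpace ℝ V] (i : ι)
    (f : EuclideanSpace ℝ ι → V) (x : EuclideanSpace ℝ ι) : V :=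
  fderiv ℝ f x (EuclideanSpace.single i 1)

local notation:max "∂[" i "]" => partialDeriv i

/-- The gradient of a vector-valued function as the tuple of its partial derivatives. It lives in
`PiLp 2` so that its norm is the Euclidean (Hilbert–Schmidt) norm. -/
def grad (f : EuclideanSpace ℝ ι → V) (x : EuclideanSpace ℝ ι) : PiLp 2 (fun _ : ι ↦ V) :=
  WithLp.toLp 2 fun i ↦ ∂[i] f x

/-- The Laplacian `∑ ∂ᵢ²f`. -/
def lap (f : EuclideanSpace ℝ ι → V) (x : EuclideanSpace ℝ ι) : V := ∑ i, ∂[i] (∂[i] f) x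

/-- The divergence of a vector field given by its components. -/
def divergence (F : ι → EuclideanSpace ℝ ι → ℝ) (x : EuclideanSpace ℝ ι) : ℝ :=
  ∑ k, ∂[k] (F k) x

/-- The derivative `∇φ · ∇f` of `f` along the gradient of `φ`. -/
def gradDot (φ : EuclideanSpace ℝ ι → ℝ) (f : EuclideanSpace ℝ ι → V)
    (x : EuclideanSpace ℝ ι) : V :=
  fderiv ℝ f x (grad φ x)

/-- The Hessian quadratic form of `φ` at `x`, extended to tuples of vectors of `V` so that it can be
evaluated at the gradient of a `V`-valued function. -/
def hessianForm (φ : EuclideanSpace ℝ ι → ℝ) (x : EuclideanSpace ℝ ι)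
    (v : PiLp 2 (fun _ : ι ↦ V)) : ℝ :=
  ∑ i, ∑ j, ∂[i] (∂[j] φ) x * ⟪v i, v j⟫_ℝ

section LeibnizRules

variable {ι : Type*} [Finite ι] [DecidableEq ι] {φ g : EuclideanSpace ℝ ι → ℝ}
  {f w : EuclideanSpace ℝ ι → V} {x : EuclideanSpace ℝ ι}

lemma partialDeriv_add (hf : DifferentiableAt ℝ f x) (hw : DifferentiableAt ℝ w x) (i : ι) :
    ∂[i] (fun y ↦ f y + w y) x = ∂[i] f x + ∂[i] w x := by
  have := Fintype.ofFinite ι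
  simp [partialDeriv, fderiv_fun_add hf hw]

lemma partialDeriv_const_smul (c : ℝ) (hf : DifferentiableAt ℝ f x) (i : ι) :
    ∂[i] (fun y ↦ c • f y) x = c • ∂[i] f x := by
  have := Fintype.ofFinite ι
  simp [partialDeriv, fderiv_fun_const_smul hf]

lemma partialDeriv_smul (hg : DifferentiableAt ℝ g x) (hf : DifferentiableAt ℝ f x) (i : ι) :
    ∂[i] (fun y ↦ g y • f y) x = ∂[i] g x • f x + g x • ∂[i] f x := by
  have := Fintype.ofFinite ι
  simp [partialDeriv, fderiv_fun_smul hg hf, add_comm]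

lemma partialDeriv_inner (hf : DifferentiableAt ℝ f x) (hw : DifferentiableAt ℝ w x) (i : ι) :
    ∂[i] (fun y ↦ ⟪f y, w y⟫_ℝ) x = ⟪f x, ∂[i] w x⟫_ℝ + ⟪∂[i] f x, w x⟫_ℝ := by
  have := Fintype.ofFinite ι
  exact fderiv_inner_apply ℝ hf hw _

lemma gradDot_norm_sq (φ : EuclideanSpace ℝ ι → ℝ) (hf : DifferentiableAt ℝ f x) :
    gradDot φ (fun y ↦ ‖f y‖ ^ 2) x = 2 * ⟪f x, gradDot φ f x⟫_ℝ := by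
  have := Fintype.ofFinite ι
  simp only [← real_inner_self_eq_norm_sq, gradDot]
  rw [fderiv_inner_apply ℝ hf hf, real_inner_comm, two_mul]

lemma gradDot_mul {g₁ g₂ : EuclideanSpace ℝ ι → ℝ} (φ : EuclideanSpace ℝ ι → ℝ)
    (hg₁ : DifferentiableAt ℝ g₁ x) (hg₂ : DifferentiableAt ℝ g₂ x) :
    gradDot φ (fun y ↦ g₁ y * g₂ y) x = gradDot φ g₁ x * g₂ x + g₁ x * gradDot φ g₂ x := by
  have := Fintype.ofFinite ι
  simp only [gradDot, fderiv_fun_mul hg₁ hg₂, add_apply, smul_apply, smul_eq_mul]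
  ring

lemma partialDeriv_exp_smul (hg : DifferentiableAt ℝ g x) (hf : DifferentiableAt ℝ f x) (i : ι) :
    ∂[i] (fun y ↦ Real.exp (g y) • f y) x =
      Real.exp (g x) • (∂[i] g x • f x + ∂[i] f x) := by
  have := Fintype.ofFinite ι
  have partialDeriv_exp : ∂[i] (fun y ↦ Real.exp (g y)) x = Real.exp (g x) * ∂[i] g x := by
    simp [partialDeriv, fderiv_exp hg]
  rw [partialDeriv_smul hg.exp hf, partialDeriv_exp, smul_add, smul_smul]

lemma grad_const_mul (c : ℝ) (hφ : DifferentiableAt ℝ φ x) :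
    grad (fun y ↦ c * φ y) x = c • grad φ x := by
  have := Fintype.ofFinite ι
  ext i
  exact partialDeriv_const_smul c hφ i

lemma partialDeriv_coord (x : EuclideanSpace ℝ ι) (i j : ι) :
    ∂[i] (fun y : EuclideanSpace ℝ ι ↦ y j) x = if i = j then 1 else 0 := by
  have := Fintype.ofFinite ι
  have hproj : HasFDerivAt (fun y : EuclideanSpace ℝ ι ↦ y j)
      (EuclideanSpace.proj j : EuclideanSpace ℝ ι →L[ℝ] ℝ) x :=
    (EuclideanSpace.proj j : EuclideanSpace ℝ ι →L[ℝ] ℝ).hasFDerivAt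
  rw [partialDeriv, hproj.fderiv]
  simp [eq_comm]

end LeibnizRules

section Calculus

variable {φ g : EuclideanSpace ℝ ι → ℝ} {f u w : EuclideanSpace ℝ ι → V} {x : EuclideanSpace ℝ ι}
  {m n : WithTop ℕ∞}

lemma norm_grad_sq (f : EuclideanSpace ℝ ι → V) (x : EuclideanSpace ℝ ι) :
    ‖grad f x‖ ^ 2 = ∑ i, ‖∂[i] f x‖ ^ 2 :=
  PiLp.norm_sq_eq_of_L2 _ _

lemma gradDot_eq_sum (φ : EuclideanSpace ℝ ι → ℝ) (f : EuclideanSpace ℝ ι → V)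
    (x : EuclideanSpace ℝ ι) : gradDot φ f x = ∑ i, ∂[i] φ x • ∂[i] f x := by
  have grad_eq_sum : grad φ x = ∑ i, ∂[i] φ x • EuclideanSpace.single i (1 : ℝ) := by
    ext j
    simp [grad, Pi.single_apply]
  simp only [gradDot, grad_eq_sum, map_sum, map_smul, partialDeriv]

lemma contDiffAt_partialDeriv (hf : ContDiffAt ℝ n f x) (hmn : m + 1 ≤ n) (i : ι) :
    ContDiffAt ℝ m (∂[i] f) x :=
  (hf.fderiv_right hmn).clm_apply contDiffAt_const

lemma differentiableAt_partialDeriv (hf : ContDiffAt ℝ 2 f x) (i : ι) :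
    DifferentiableAt ℝ (∂[i] f) x :=
  (contDiffAt_partialDeriv hf one_add_one_eq_two.le i).differentiableAt one_ne_zero

lemma contDiffAt_lap (hf : ContDiffAt ℝ n f x) (hmn : m + 1 + 1 ≤ n) :
    ContDiffAt ℝ m (lap f) x :=
  ContDiffAt.sum fun i _ ↦ contDiffAt_partialDeriv (contDiffAt_partialDeriv hf hmn i) le_rfl i

lemma contDiffAt_norm_grad_sq (hf : ContDiffAt ℝ n f x) (hmn : m + 1 ≤ n) :
    ContDiffAt ℝ m (fun y ↦ ‖grad f y‖ ^ 2) x := by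
  simp only [norm_grad_sq]
  exact ContDiffAt.sum fun i _ ↦ (contDiffAt_partialDeriv hf hmn i).norm_sq ℝ

lemma contDiffAt_gradDot (hφ : ContDiffAt ℝ n φ x) (hu : ContDiffAt ℝ n u x) (hmn : m + 1 ≤ n) :
    ContDiffAt ℝ m (gradDot φ u) x := by
  simp only [funext (gradDot_eq_sum φ u)]
  exact ContDiffAt.sum fun i _ ↦
    (contDiffAt_partialDeriv hφ hmn i).smul (contDiffAt_partialDeriv hu hmn i)

lemma partialDeriv_comm (hf : ContDiffAt ℝ 2 f x) (i j : ι) :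
    ∂[i] (∂[j] f) x = ∂[j] (∂[i] f) x := by
  have hdf : DifferentiableAt ℝ (fderiv ℝ f) x :=
    (hf.fderiv_right one_add_one_eq_two.le).differentiableAt one_ne_zero
  have iterated_eq (k l : ι) : ∂[k] (∂[l] f) x = fderiv ℝ (fderiv ℝ f) x
      (EuclideanSpace.single k 1) (EuclideanSpace.single l 1) := by
    change fderiv ℝ (fun y ↦ fderiv ℝ f y _) x _ = _
    rw [fderiv_clm_apply hdf (differentiableAt_const _)]
    simp
  rw [iterated_eq, iterated_eq]
  exact hf.isSymmSndFDerivAt (by simp) _ _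

lemma partialDeriv_gradDot (hφ : ContDiffAt ℝ 2 φ x) (hu : ContDiffAt ℝ 2 u x) (k : ι) :
    ∂[k] (gradDot φ u) x =
      ∑ i, (∂[k] (∂[i] φ) x • ∂[i] u x + ∂[i] φ x • ∂[k] (∂[i] u) x) := by
  have hterm (i : ι) : DifferentiableAt ℝ (fun y ↦ ∂[i] φ y • ∂[i] u y) x :=
    (differentiableAt_partialDeriv hφ i).smul (differentiableAt_partialDeriv hu i)
  calc ∂[k] (gradDot φ u) x = ∑ i, ∂[k] (fun y ↦ ∂[i] φ y • ∂[i] u y) x := by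
        rw [funext (gradDot_eq_sum φ u), partialDeriv, fderiv_fun_sum fun i _ ↦ hterm i, sum_apply]
        rfl
    _ = _ := Finset.sum_congr rfl fun i _ ↦ partialDeriv_smul
        (differentiableAt_partialDeriv hφ i) (differentiableAt_partialDeriv hu i) k

lemma gradDot_norm_grad_sq (φ : EuclideanSpace ℝ ι → ℝ) (hf : ContDiffAt ℝ 2 f x) :
    gradDot φ (fun y ↦ ‖grad f y‖ ^ 2) x =
      2 * ∑ k, ∑ i, ∂[i] φ x * ⟪∂[k] (∂[i] f) x, ∂[k] f x⟫_ℝ := by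
  have hdiff (k : ι) : DifferentiableAt ℝ (∂[k] f) x := differentiableAt_partialDeriv hf k
  calc gradDot φ (fun y ↦ ‖grad f y‖ ^ 2) x = ∑ k, gradDot φ (fun y ↦ ‖∂[k] f y‖ ^ 2) x := by
        simp only [norm_grad_sq, gradDot]
        rw [fderiv_fun_sum fun k _ ↦ (hdiff k).norm_sq ℝ, sum_apply]
    _ = ∑ k, 2 * ∑ i, ∂[i] φ x * ⟪∂[k] (∂[i] f) x, ∂[k] f x⟫_ℝ := by
        refine Finset.sum_congr rfl fun k _ ↦ ?_
        simp only [gradDot_norm_sq φ (hdiff k), gradDot_eq_sum, inner_sum, real_inner_smul_right,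
          real_inner_comm, partialDeriv_comm hf _ k]
    _ = _ := by rw [Finset.mul_sum]

lemma gradDot_norm_grad_sq_self (hφ : ContDiffAt ℝ 2 φ x) :
    gradDot φ (fun y ↦ ‖grad φ y‖ ^ 2) x = 2 * hessianForm φ x (grad φ x) := by
  rw [gradDot_norm_grad_sq φ hφ, hessianForm]
  congr! 2 with k
  refine Finset.sum_congr rfl fun i _ ↦ ?_
  simp only [grad, RCLike.inner_apply, conj_trivial]
  ring

lemma divergence_inner_grad (hw : DifferentiableAt ℝ w x) (hu : ContDiffAt ℝ 2 u x) :
    divergence (fun k y ↦ ⟪w y, ∂[k] u y⟫_ℝ) x =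
      ⟪w x, lap u x⟫_ℝ + ∑ k, ⟪∂[k] w x, ∂[k] u x⟫_ℝ := by
  simp only [divergence, lap, partialDeriv_inner hw (differentiableAt_partialDeriv hu _),
    Finset.sum_add_distrib, inner_sum]

lemma divergence_mul_grad (hg : DifferentiableAt ℝ g x) (hφ : ContDiffAt ℝ 2 φ x) :
    divergence (fun k y ↦ g y * ∂[k] φ y) x = g x * lap φ x + gradDot φ g x := by
  have := divergence_inner_grad hg hφ
  simpa [mul_comm, gradDot_eq_sum] using this

lemma norm_gradDot_le (φ : EuclideanSpace ℝ ι → ℝ) (f : EuclideanSpace ℝ ι → V)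
    (x : EuclideanSpace ℝ ι) : ‖gradDot φ f x‖ ≤ ‖grad φ x‖ * ‖grad f x‖ := by
  rw [gradDot_eq_sum]
  exact norm_sum_smul_le (grad φ x) (grad f x)

lemma abs_inner_gradDot_le (φ : EuclideanSpace ℝ ι → ℝ) (f : EuclideanSpace ℝ ι → V)
    (x : EuclideanSpace ℝ ι) :
    |⟪f x, gradDot φ f x⟫_ℝ| ≤ ‖grad φ x‖ * ‖grad f x‖ * ‖f x‖ :=
  calc |⟪f x, gradDot φ f x⟫_ℝ| ≤ ‖f x‖ * ‖gradDot φ f x‖ := abs_real_inner_le_norm _ _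
    _ ≤ ‖f x‖ * (‖grad φ x‖ * ‖grad f x‖) := by gcongr; exact norm_gradDot_le φ f x
    _ = ‖grad φ x‖ * ‖grad f x‖ * ‖f x‖ := mul_comm _ _

lemma le_hessianForm_of_forall_real {m : ℝ}
    (hφ : ∀ s : EuclideanSpace ℝ ι, m * ‖s‖ ^ 2 ≤ hessianForm φ x s)
    (v : PiLp 2 (fun _ : ι ↦ V)) : m * ‖v‖ ^ 2 ≤ hessianForm φ x v := by
  rw [PiLp.norm_sq_eq_of_L2]
  refine le_sum_mul_inner_of_forall_real (fun s ↦ ?_) v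
  simpa [hessianForm, EuclideanSpace.real_norm_sq_eq, mul_comm] using hφ (WithLp.toLp 2 s)

end Calculus

section Conjugation

variable {h : ℝ} {φ ψ W : EuclideanSpace ℝ ι → ℝ} {u : EuclideanSpace ℝ ι → V}
  {x : EuclideanSpace ℝ ι}

/-- The conjugated semiclassical Schrödinger operator `e^{φ/h}(−h²Δ + W)(e^{−φ/h}u)`. -/
def conjSchrodinger (h : ℝ) (φ W : EuclideanSpace ℝ ι → ℝ) (u : EuclideanSpace ℝ ι → V)
    (x : EuclideanSpace ℝ ι) : V :=
  Real.exp (φ x / h) • (-h ^ 2 • lap (fun y ↦ Real.exp (-φ y / h) • u y) x +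
    W x • (Real.exp (-φ x / h) • u x))

/-- The formally self-adjoint part `−h²Δ + W − |∇φ|²` of the conjugated operator. -/
def symPart (h : ℝ) (φ W : EuclideanSpace ℝ ι → ℝ) (u : EuclideanSpace ℝ ι → V)
    (x : EuclideanSpace ℝ ι) : V :=
  -h ^ 2 • lap u x + (W x - ‖grad φ x‖ ^ 2) • u x

/-- The formally skew-adjoint part `h(2∇φ·∇ + Δφ)` of the conjugated operator. -/
def skewPart (h : ℝ) (φ : EuclideanSpace ℝ ι → ℝ) (u : EuclideanSpace ℝ ι → V)
    (x : EuclideanSpace ℝ ι) : V :=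
  h • ((2 : ℝ) • gradDot φ u x + lap φ x • u x)

lemma partialDeriv_partialDeriv_exp_smul (hψ : ContDiffAt ℝ 2 ψ x) (hu : ContDiffAt ℝ 2 u x)
    (i : ι) :
    ∂[i] (∂[i] (fun y ↦ Real.exp (ψ y) • u y)) x = Real.exp (ψ x) • (∂[i] (∂[i] u) x +
      (2 : ℝ) • ∂[i] ψ x • ∂[i] u x + (∂[i] (∂[i] ψ) x + ‖∂[i] ψ x‖ ^ 2) • u x) := by
  have first_order : ∂[i] (fun y ↦ Real.exp (ψ y) • u y) =ᶠ[𝓝 x]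
      fun y ↦ Real.exp (ψ y) • (∂[i] ψ y • u y + ∂[i] u y) := by
    filter_upwards [hψ.eventually (by simp), hu.eventually (by simp)] with y hψy huy
    exact partialDeriv_exp_smul (hψy.differentiableAt two_ne_zero)
      (huy.differentiableAt two_ne_zero) i
  have hψ' := hψ.differentiableAt two_ne_zero
  have hu' := hu.differentiableAt two_ne_zero
  have hψi := differentiableAt_partialDeriv hψ i
  have hui := differentiableAt_partialDeriv hu i
  rw [partialDeriv, first_order.fderiv_eq, ← partialDeriv,
    partialDeriv_exp_smul hψ' ((hψi.fun_smul hu').fun_add hui),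
    partialDeriv_add (hψi.fun_smul hu') hui, partialDeriv_smul hψi hu', Real.norm_eq_abs, sq_abs]
  module

lemma lap_exp_smul (hψ : ContDiffAt ℝ 2 ψ x) (hu : ContDiffAt ℝ 2 u x) :
    lap (fun y ↦ Real.exp (ψ y) • u y) x = Real.exp (ψ x) •
      (lap u x + (2 : ℝ) • gradDot ψ u x + (lap ψ x + ‖grad ψ x‖ ^ 2) • u x) := by
  simp only [lap, partialDeriv_partialDeriv_exp_smul hψ hu, gradDot_eq_sum, norm_grad_sq,
    Finset.sum_add_distrib, ← Finset.smul_sum, Finset.sum_smul, add_smul]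

lemma lap_const_mul (c : ℝ) (hφ : ContDiffAt ℝ 2 φ x) :
    lap (fun y ↦ c * φ y) x = c * lap φ x := by
  simp only [lap, Finset.mul_sum]
  refine Finset.sum_congr rfl fun i _ ↦ ?_
  have first_order : ∂[i] (fun y ↦ c * φ y) =ᶠ[𝓝 x] fun y ↦ c • ∂[i] φ y := by
    filter_upwards [hφ.eventually (by simp)] with y hφy
    exact partialDeriv_const_smul c (hφy.differentiableAt two_ne_zero) i
  rw [partialDeriv, first_order.fderiv_eq, ← partialDeriv,
    partialDeriv_const_smul c (differentiableAt_partialDeriv hφ i), smul_eq_mul]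

lemma conjSchrodinger_eq_symPart_add_skewPart (hh : h ≠ 0) (W : EuclideanSpace ℝ ι → ℝ)
    (hφ : ContDiffAt ℝ 2 φ x) (hu : ContDiffAt ℝ 2 u x) :
    conjSchrodinger h φ W u x = symPart h φ W u x + skewPart h φ u x := by
  have hφ' := hφ.differentiableAt two_ne_zero
  have exponent_eq (y : EuclideanSpace ℝ ι) : -φ y / h = -h⁻¹ * φ y := by ring
  have exp_mul_exp : Real.exp (φ x / h) * Real.exp (-h⁻¹ * φ x) = 1 := by
    rw [← Real.exp_add, ← exponent_eq, neg_div, add_neg_cancel, Real.exp_zero]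
  have lap_eq := lap_exp_smul (contDiffAt_const (c := -h⁻¹).mul hφ) hu
  rw [lap_const_mul _ hφ, gradDot, grad_const_mul _ hφ', map_smul, ← gradDot, norm_smul, mul_pow,
    Real.norm_eq_abs, sq_abs] at lap_eq
  calc conjSchrodinger h φ W u x
      = (Real.exp (φ x / h) * Real.exp (-h⁻¹ * φ x)) • (-h ^ 2 • (lap u x +
          (2 : ℝ) • -h⁻¹ • gradDot φ u x +
          (-h⁻¹ * lap φ x + (-h⁻¹) ^ 2 * ‖grad φ x‖ ^ 2) • u x) + W x • u x) := by
        simp only [conjSchrodinger, exponent_eq, lap_eq]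
        module
    _ = symPart h φ W u x + skewPart h φ u x := by
        rw [exp_mul_exp, one_smul, symPart, skewPart]
        match_scalars <;> field_simp
        ring

end Conjugation

section CommutatorIdentity

variable {h : ℝ} {φ W : EuclideanSpace ℝ ι → ℝ} {u : EuclideanSpace ℝ ι → V}
  {x : EuclideanSpace ℝ ι}

/-- The density `h(h²|∇u|² + (W − |∇φ|²)|u|²)`, whose transport along `∇φ` contributes to
`⟪symPart u, skewPart u⟫`. -/
def energy (h : ℝ) (φ W : EuclideanSpace ℝ ι → ℝ) (u : EuclideanSpace ℝ ι → V)
    (x : EuclideanSpace ℝ ι) : ℝ :=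
  h * (h ^ 2 * ‖grad u x‖ ^ 2 + (W x - ‖grad φ x‖ ^ 2) * ‖u x‖ ^ 2)

/-- The vector field whose divergence is the exact part of `⟪symPart u, skewPart u⟫`. -/
def flux (h : ℝ) (φ W : EuclideanSpace ℝ ι → ℝ) (u : EuclideanSpace ℝ ι → V) (k : ι)
    (x : EuclideanSpace ℝ ι) : ℝ :=
  -h ^ 2 * ⟪skewPart h φ u x, ∂[k] u x⟫_ℝ + energy h φ W u x * ∂[k] φ x

/-- The density of the quadratic form of half the commutator of the self-adjoint and skew-adjoint
parts of the conjugated operator, up to a divergence. -/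
def commutatorForm (h : ℝ) (φ W : EuclideanSpace ℝ ι → ℝ) (u : EuclideanSpace ℝ ι → V)
    (x : EuclideanSpace ℝ ι) : ℝ :=
  2 * h ^ 3 * hessianForm φ x (grad u x) + 2 * h * hessianForm φ x (grad φ x) * ‖u x‖ ^ 2
    + h ^ 3 * ⟪u x, gradDot (lap φ) u x⟫_ℝ - h * gradDot φ W x * ‖u x‖ ^ 2

lemma contDiffAt_skewPart (h : ℝ) (hφ : ContDiffAt ℝ 3 φ x) (hu : ContDiffAt ℝ 2 u x) :
    ContDiffAt ℝ 1 (skewPart h φ u) x := by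
  have hgradDot : ContDiffAt ℝ 1 (gradDot φ u) x :=
    contDiffAt_gradDot (hφ.of_le (by norm_num)) hu (by norm_num)
  have hlap : ContDiffAt ℝ 1 (lap φ) x := contDiffAt_lap hφ (by norm_num)
  exact ((hgradDot.const_smul 2).add (hlap.smul (hu.of_le one_le_two))).const_smul h

lemma contDiffAt_energy (h : ℝ) (hφ : ContDiffAt ℝ 2 φ x) (hW : ContDiffAt ℝ 1 W x)
    (hu : ContDiffAt ℝ 2 u x) : ContDiffAt ℝ 1 (energy h φ W u) x := by
  have hgrad_u : ContDiffAt ℝ 1 (fun y ↦ ‖grad u y‖ ^ 2) x :=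
    contDiffAt_norm_grad_sq hu one_add_one_eq_two.le
  have hgrad_φ : ContDiffAt ℝ 1 (fun y ↦ ‖grad φ y‖ ^ 2) x :=
    contDiffAt_norm_grad_sq hφ one_add_one_eq_two.le
  have hnorm_sq := (hu.of_le one_le_two).norm_sq ℝ
  exact contDiffAt_const.mul ((contDiffAt_const.mul hgrad_u).add
    ((hW.sub hgrad_φ).mul hnorm_sq))

lemma contDiffAt_flux (h : ℝ) (hφ : ContDiffAt ℝ 3 φ x) (hW : ContDiffAt ℝ 1 W x)
    (hu : ContDiffAt ℝ 2 u x) (k : ι) : ContDiffAt ℝ 1 (flux h φ W u k) x := by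
  have hφ₂ : ContDiffAt ℝ 2 φ x := hφ.of_le (by norm_num)
  have hpartial_u := contDiffAt_partialDeriv hu one_add_one_eq_two.le k
  have hpartial_φ := contDiffAt_partialDeriv hφ₂ one_add_one_eq_two.le k
  exact (contDiffAt_const.mul ((contDiffAt_skewPart h hφ hu).inner ℝ hpartial_u)).add
    ((contDiffAt_energy h hφ₂ hW hu).mul hpartial_φ)

lemma partialDeriv_skewPart (h : ℝ) (hφ : ContDiffAt ℝ 3 φ x) (hu : ContDiffAt ℝ 2 u x) (k : ι) :
    ∂[k] (skewPart h φ u) x = h • ((2 : ℝ) • ∂[k] (gradDot φ u) x +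
      (∂[k] (lap φ) x • u x + lap φ x • ∂[k] u x)) := by
  have hgradDot : DifferentiableAt ℝ (gradDot φ u) x :=
    (contDiffAt_gradDot (m := 1) (hφ.of_le (by norm_num)) hu (by norm_num)).differentiableAt
      one_ne_zero
  have hlap : DifferentiableAt ℝ (lap φ) x :=
    (contDiffAt_lap (m := 1) hφ (by norm_num)).differentiableAt one_ne_zero
  have hu' := hu.differentiableAt two_ne_zero
  change ∂[k] (fun y ↦ h • ((2 : ℝ) • gradDot φ u y + lap φ y • u y)) x = _
  rw [partialDeriv_const_smul h ((hgradDot.fun_const_smul _).fun_add (hlap.fun_smul hu')),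
    partialDeriv_add (hgradDot.fun_const_smul _) (hlap.fun_smul hu'),
    partialDeriv_const_smul _ hgradDot, partialDeriv_smul hlap hu']

lemma sum_inner_partialDeriv_gradDot (hφ : ContDiffAt ℝ 2 φ x) (hu : ContDiffAt ℝ 2 u x) :
    2 * ∑ k, ⟪∂[k] (gradDot φ u) x, ∂[k] u x⟫_ℝ =
      2 * hessianForm φ x (grad u x) + gradDot φ (fun y ↦ ‖grad u y‖ ^ 2) x := by
  rw [gradDot_norm_grad_sq φ hu, hessianForm, ← mul_add, ← Finset.sum_add_distrib]
  congr! 2 with k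
  simp only [partialDeriv_gradDot hφ hu, sum_inner, inner_add_left,
    real_inner_smul_right, Finset.sum_add_distrib, real_inner_comm, grad]

lemma sum_inner_partialDeriv_skewPart (h : ℝ) (hφ : ContDiffAt ℝ 3 φ x)
    (hu : ContDiffAt ℝ 2 u x) :
    ∑ k, ⟪∂[k] (skewPart h φ u) x, ∂[k] u x⟫_ℝ =
      h * (2 * hessianForm φ x (grad u x) + gradDot φ (fun y ↦ ‖grad u y‖ ^ 2) x +
        ⟪u x, gradDot (lap φ) u x⟫_ℝ + lap φ x * ‖grad u x‖ ^ 2) := by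
  rw [← sum_inner_partialDeriv_gradDot (hφ.of_le (by norm_num)) hu, gradDot_eq_sum, norm_grad_sq]
  simp only [partialDeriv_skewPart h hφ hu, inner_add_left, real_inner_smul_left, inner_sum,
    real_inner_smul_right, real_inner_self_eq_norm_sq, mul_add, Finset.sum_add_distrib,
    Finset.mul_sum]
  ring

lemma gradDot_energy (h : ℝ) (hφ : ContDiffAt ℝ 2 φ x) (hW : DifferentiableAt ℝ W x)
    (hu : ContDiffAt ℝ 2 u x) :
    gradDot φ (energy h φ W u) x = h * (h ^ 2 * gradDot φ (fun y ↦ ‖grad u y‖ ^ 2) x +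
      (gradDot φ W x - 2 * hessianForm φ x (grad φ x)) * ‖u x‖ ^ 2 +
      (W x - ‖grad φ x‖ ^ 2) * (2 * ⟪u x, gradDot φ u x⟫_ℝ)) := by
  have hgrad_φ : DifferentiableAt ℝ (fun y ↦ ‖grad φ y‖ ^ 2) x :=
    (contDiffAt_norm_grad_sq (m := 1) hφ one_add_one_eq_two.le).differentiableAt one_ne_zero
  have hgrad_u : DifferentiableAt ℝ (fun y ↦ ‖grad u y‖ ^ 2) x :=
    (contDiffAt_norm_grad_sq (m := 1) hu one_add_one_eq_two.le).differentiableAt one_ne_zero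
  have hu' := hu.differentiableAt two_ne_zero
  have hpotential := hW.fun_sub hgrad_φ
  have hprod := hpotential.fun_mul (hu'.norm_sq ℝ)
  have gradDot_prod := gradDot_mul φ hpotential (hu'.norm_sq ℝ)
  have gradDot_potential : gradDot φ (fun y ↦ W y - ‖grad φ y‖ ^ 2) x =
      gradDot φ W x - 2 * hessianForm φ x (grad φ x) := by
    rw [← gradDot_norm_grad_sq_self hφ, gradDot, fderiv_fun_sub hW hgrad_φ]
    rfl
  rw [gradDot_norm_sq φ hu', gradDot_potential] at gradDot_prod
  rw [add_assoc, ← gradDot_prod, gradDot]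
  change fderiv ℝ (fun y ↦ h * (h ^ 2 * ‖grad u y‖ ^ 2 + (W y - ‖grad φ y‖ ^ 2) * ‖u y‖ ^ 2)) x _
    = _
  rw [fderiv_const_mul ((hgrad_u.const_mul _).fun_add hprod),
    fderiv_fun_add (hgrad_u.const_mul _) hprod, fderiv_const_mul hgrad_u]
  rfl

lemma divergence_flux (h : ℝ) (hφ : ContDiffAt ℝ 3 φ x) (hW : ContDiffAt ℝ 1 W x)
    (hu : ContDiffAt ℝ 2 u x) :
    divergence (flux h φ W u) x =
      -h ^ 2 * divergence (fun k y ↦ ⟪skewPart h φ u y, ∂[k] u y⟫_ℝ) x +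
        divergence (fun k y ↦ energy h φ W u y * ∂[k] φ y) x := by
  have hφ₂ : ContDiffAt ℝ 2 φ x := hφ.of_le (by norm_num)
  have hskew (k : ι) : DifferentiableAt ℝ (fun y ↦ ⟪skewPart h φ u y, ∂[k] u y⟫_ℝ) x :=
    ((contDiffAt_skewPart h hφ hu).differentiableAt one_ne_zero).inner ℝ
      (differentiableAt_partialDeriv hu k)
  have henergy (k : ι) : DifferentiableAt ℝ (fun y ↦ energy h φ W u y * ∂[k] φ y) x :=
    ((contDiffAt_energy h hφ₂ hW hu).differentiableAt one_ne_zero).mul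
      (differentiableAt_partialDeriv hφ₂ k)
  simp only [divergence, Finset.mul_sum, ← Finset.sum_add_distrib]
  refine Finset.sum_congr rfl fun k _ ↦ ?_
  change ∂[k] (fun y ↦ (-h ^ 2) • ⟪skewPart h φ u y, ∂[k] u y⟫_ℝ +
    energy h φ W u y * ∂[k] φ y) x = _
  rw [partialDeriv_add ((hskew k).fun_const_smul _) (henergy k),
    partialDeriv_const_smul _ (hskew k), smul_eq_mul]

theorem inner_symPart_skewPart (h : ℝ) (hφ : ContDiffAt ℝ 3 φ x) (hW : ContDiffAt ℝ 1 W x)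
    (hu : ContDiffAt ℝ 2 u x) :
    ⟪symPart h φ W u x, skewPart h φ u x⟫_ℝ =
      divergence (flux h φ W u) x + commutatorForm h φ W u x := by
  have hφ₂ : ContDiffAt ℝ 2 φ x := hφ.of_le (by norm_num)
  have hskew := (contDiffAt_skewPart h hφ hu).differentiableAt one_ne_zero
  have henergy := (contDiffAt_energy h hφ₂ hW hu).differentiableAt one_ne_zero
  have inner_skewPart_self : ⟪u x, skewPart h φ u x⟫_ℝ =
      h * (2 * ⟪u x, gradDot φ u x⟫_ℝ + lap φ x * ‖u x‖ ^ 2) := by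
    simp only [skewPart, real_inner_smul_right, inner_add_right, real_inner_self_eq_norm_sq]
  rw [divergence_flux h hφ hW hu, divergence_inner_grad hskew hu, divergence_mul_grad henergy hφ₂,
    sum_inner_partialDeriv_skewPart h hφ hu,
    gradDot_energy h hφ₂ (hW.differentiableAt one_ne_zero) hu, symPart, inner_add_left,
    real_inner_smul_left, real_inner_smul_left, inner_skewPart_self, real_inner_comm (lap u x),
    energy, commutatorForm]
  ring

end CommutatorIdentity

section Coercivity

variable {h κ m δ M : ℝ} {φ W : EuclideanSpace ℝ ι → ℝ} {u : EuclideanSpace ℝ ι → V}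
  {x : EuclideanSpace ℝ ι}

/-- The quantitative properties of a weight `φ` at `x` that make the commutator form coercive:
`D²φ ≥ m`, `|∇φ| ≥ δ` and `|∇Δφ| ≤ M`. -/
structure CarlemanWeightAt (φ : EuclideanSpace ℝ ι → ℝ) (m δ M : ℝ) (x : EuclideanSpace ℝ ι) :
    Prop where
  contDiffAt : ContDiffAt ℝ 3 φ x
  le_hessianForm : ∀ s : EuclideanSpace ℝ ι, m * ‖s‖ ^ 2 ≤ hessianForm φ x s
  le_norm_grad : δ ≤ ‖grad φ x‖
  norm_grad_lap_le : ‖grad (lap φ) x‖ ≤ M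

lemma le_commutatorForm (hφ : CarlemanWeightAt φ m δ M x) (hm : 0 ≤ m) (hδ : 0 ≤ δ)
    (hW : ‖grad W x‖ ≤ m * δ) (hκm : κ ≤ m) (hκδ : κ ≤ m * δ ^ 2) (hh : 0 ≤ h) (hhM : h * M ≤ κ)
    (u : EuclideanSpace ℝ ι → V) :
    h * (κ / 2) * (‖u x‖ ^ 2 + h ^ 2 * ‖grad u x‖ ^ 2) ≤ commutatorForm h φ W u x := by
  set G := ‖grad φ x‖
  set p := ‖grad u x‖
  set q := ‖u x‖
  have hδG : δ ≤ G := hφ.le_norm_grad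
  have hessian_grad_u : m * p ^ 2 ≤ hessianForm φ x (grad u x) :=
    le_hessianForm_of_forall_real hφ.le_hessianForm _
  have hessian_grad_φ : m * G ^ 2 ≤ hessianForm φ x (grad φ x) := hφ.le_hessianForm _
  have potential_term : gradDot φ W x ≤ m * G ^ 2 :=
    calc gradDot φ W x ≤ G * ‖grad W x‖ := (le_abs_self _).trans (norm_gradDot_le φ W x)
      _ ≤ G * (m * G) := by gcongr; exact hW.trans (by gcongr)
      _ = m * G ^ 2 := by ring
  have cross_term : -(M * p * q) ≤ ⟪u x, gradDot (lap φ) u x⟫_ℝ := by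
    refine neg_le_of_abs_le ((abs_inner_gradDot_le _ _ _).trans ?_)
    gcongr
    exact hφ.norm_grad_lap_le
  have absorb_cross_term : h * M * (q * (h * p)) ≤ κ / 2 * (q ^ 2 + h ^ 2 * p ^ 2) := by
    have hM : 0 ≤ M := (norm_nonneg _).trans hφ.norm_grad_lap_le
    have hκ : 0 ≤ κ := (mul_nonneg hh hM).trans hhM
    calc h * M * (q * (h * p)) ≤ κ * (q * (h * p)) := by gcongr
      _ ≤ κ * ((q ^ 2 + (h * p) ^ 2) / 2) := by gcongr; linarith [two_mul_le_add_sq q (h * p)]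
      _ = κ / 2 * (q ^ 2 + h ^ 2 * p ^ 2) := by ring
  calc h * (κ / 2) * (q ^ 2 + h ^ 2 * p ^ 2)
      = h * (κ * q ^ 2 + κ * (h ^ 2 * p ^ 2) - κ / 2 * (q ^ 2 + h ^ 2 * p ^ 2)) := by ring
    _ ≤ h * (m * G ^ 2 * q ^ 2 + 2 * m * (h ^ 2 * p ^ 2) - h * M * (q * (h * p))) := by
        gcongr
        · exact hκδ.trans (by gcongr)
        · linarith
    _ = 2 * h ^ 3 * (m * p ^ 2) + 2 * h * (m * G ^ 2) * q ^ 2 + h ^ 3 * -(M * p * q)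
          - h * (m * G ^ 2) * q ^ 2 := by ring
    _ ≤ commutatorForm h φ W u x := by
        unfold commutatorForm
        gcongr

lemma add_divergence_flux_le_norm_conjSchrodinger_sq (hφ : CarlemanWeightAt φ m δ M x)
    (hm : 0 ≤ m) (hδ : 0 ≤ δ) (hWx : ContDiffAt ℝ 1 W x) (hW : ‖grad W x‖ ≤ m * δ) (hκm : κ ≤ m)
    (hκδ : κ ≤ m * δ ^ 2) (hh : 0 < h) (hhM : h * M ≤ κ) (hu : ContDiffAt ℝ 2 u x) :
    2 * κ * h * (‖u x‖ ^ 2 + h ^ 2 * ‖grad u x‖ ^ 2) + 4 * divergence (flux h φ W u) x ≤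
      ‖conjSchrodinger h φ W u x‖ ^ 2 := by
  have coercive := le_commutatorForm hφ hm hδ hW hκm hκδ hh.le hhM u
  calc 2 * κ * h * (‖u x‖ ^ 2 + h ^ 2 * ‖grad u x‖ ^ 2) + 4 * divergence (flux h φ W u) x
      ≤ 4 * (divergence (flux h φ W u) x + commutatorForm h φ W u x) := by linarith
    _ = 4 * ⟪symPart h φ W u x, skewPart h φ u x⟫_ℝ := by
        rw [inner_symPart_skewPart h hφ.contDiffAt hWx hu]
    _ ≤ ‖symPart h φ W u x + skewPart h φ u x‖ ^ 2 := by
        linarith [norm_add_sq_real (symPart h φ W u x) (skewPart h φ u x),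
          norm_sub_sq_real (symPart h φ W u x) (skewPart h φ u x),
          sq_nonneg ‖symPart h φ W u x - skewPart h φ u x‖]
    _ = ‖conjSchrodinger h φ W u x‖ ^ 2 := by
        rw [conjSchrodinger_eq_symPart_add_skewPart hh.ne' W
          (hφ.contDiffAt.of_le (by norm_num)) hu]

end Coercivity

section Support

variable {ι : Type*} [DecidableEq ι] {f : EuclideanSpace ℝ ι → V} {x : EuclideanSpace ℝ ι}

lemma partialDeriv_eq_zero_of_notMem_tsupport (hx : x ∉ tsupport f) (i : ι) : ∂[i] f x = 0 :=
  image_eq_zero_of_notMem_tsupport fun hx' ↦ hx (tsupport_fderiv_apply_subset ℝ _ hx')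

lemma grad_eq_zero_of_notMem_tsupport (hx : x ∉ tsupport f) : grad f x = 0 := by
  ext i
  exact partialDeriv_eq_zero_of_notMem_tsupport hx i

end Support

section Integration

variable {h κ m δ M : ℝ} {φ W : EuclideanSpace ℝ ι → ℝ} {f u : EuclideanSpace ℝ ι → V}
  {F : ι → EuclideanSpace ℝ ι → ℝ} {x : EuclideanSpace ℝ ι}

lemma integrable_partialDeriv {g : EuclideanSpace ℝ ι → ℝ} (hg : ContDiff ℝ 1 g)
    (hsupp : HasCompactSupport g) (i : ι) : Integrable (∂[i] g) :=
  ((hg.continuous_fderiv one_ne_zero).clm_apply continuous_const).integrable_of_hasCompactSupport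
    (hsupp.fderiv_apply ℝ _)

lemma integral_partialDeriv_eq_zero {g : EuclideanSpace ℝ ι → ℝ} (hg : ContDiff ℝ 1 g)
    (hsupp : HasCompactSupport g) (i : ι) : ∫ x, ∂[i] g x = 0 := by
  have by_parts := integral_mul_fderiv_eq_neg_fderiv_mul_of_integrable
    (μ := (volume : Measure (EuclideanSpace ℝ ι))) (f := fun _ ↦ (1 : ℝ)) (g := g)
    (v := EuclideanSpace.single i 1) (by simp)
    (by simpa only [one_mul] using! integrable_partialDeriv hg hsupp i)
    (by simpa using hg.continuous.integrable_of_hasCompactSupport hsupp)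
    (fun x _ ↦ differentiableAt_const _) (fun x _ ↦ hg.differentiable one_ne_zero x)
  simpa [partialDeriv] using by_parts

lemma integrable_divergence (hF : ∀ k, ContDiff ℝ 1 (F k))
    (hsupp : ∀ k, HasCompactSupport (F k)) : Integrable (divergence F) :=
  integrable_finsetSum _ fun k _ ↦ integrable_partialDeriv (hF k) (hsupp k) k

theorem integral_divergence_eq_zero (hF : ∀ k, ContDiff ℝ 1 (F k))
    (hsupp : ∀ k, HasCompactSupport (F k)) : ∫ x, divergence F x = 0 := by
  simp only [divergence]
  rw [integral_finsetSum _ fun k _ ↦ integrable_partialDeriv (hF k) (hsupp k) k]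
  exact Finset.sum_eq_zero fun k _ ↦ integral_partialDeriv_eq_zero (hF k) (hsupp k) k

lemma lap_eq_zero_of_notMem_tsupport (hx : x ∉ tsupport f) : lap f x = 0 :=
  Finset.sum_eq_zero fun i _ ↦ partialDeriv_eq_zero_of_notMem_tsupport
    (fun hx' ↦ hx (tsupport_fderiv_apply_subset ℝ _ hx')) i

lemma support_flux_subset (h : ℝ) (φ W : EuclideanSpace ℝ ι → ℝ) (u : EuclideanSpace ℝ ι → V)
    (k : ι) : Function.support (flux h φ W u k) ⊆ tsupport u := by
  refine Function.support_subset_iff'.2 fun x hx ↦ ?_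
  simp [flux, energy, partialDeriv_eq_zero_of_notMem_tsupport hx,
    grad_eq_zero_of_notMem_tsupport hx, image_eq_zero_of_notMem_tsupport hx]

lemma support_conjSchrodinger_subset (h : ℝ) (φ W : EuclideanSpace ℝ ι → ℝ)
    (u : EuclideanSpace ℝ ι → V) : Function.support (conjSchrodinger h φ W u) ⊆ tsupport u := by
  refine Function.support_subset_iff'.2 fun x hx ↦ ?_
  have hx' : x ∉ tsupport (fun y ↦ Real.exp (-φ y / h) • u y) :=
    fun hmem ↦ hx (tsupport_smul_subset_right _ _ hmem)
  simp [conjSchrodinger, lap_eq_zero_of_notMem_tsupport hx', image_eq_zero_of_notMem_tsupport hx]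

lemma contDiff_flux (h : ℝ) (hφ : ∀ x ∈ tsupport u, ContDiffAt ℝ 3 φ x)
    (hW : ∀ x ∈ tsupport u, ContDiffAt ℝ 1 W x) (hu : ContDiff ℝ 2 u) (k : ι) :
    ContDiff ℝ 1 (flux h φ W u k) :=
  contMDiff_iff_contDiff.1 <| contMDiff_of_tsupport fun x hx ↦ by
    have hxu := closure_minimal (support_flux_subset h φ W u k) (isClosed_tsupport u) hx
    exact (contDiffAt_flux h (hφ x hxu) (hW x hxu) hu.contDiffAt k).contMDiffAt

lemma continuousAt_conjSchrodinger (h : ℝ) (hφ : ContDiffAt ℝ 2 φ x) (hW : ContinuousAt W x)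
    (hu : ContDiffAt ℝ 2 u x) : ContinuousAt (conjSchrodinger h φ W u) x := by
  have hconj : ContDiffAt ℝ 2 (fun y ↦ Real.exp (-φ y / h) • u y) x :=
    (hφ.neg.div_const h).exp.smul hu
  have hlap : ContinuousAt (lap fun y ↦ Real.exp (-φ y / h) • u y) x :=
    (contDiffAt_lap (m := 0) hconj (by norm_num)).continuousAt
  exact (hφ.continuousAt.div_const h).rexp.smul
    ((hlap.const_smul _).add (hW.smul hconj.continuousAt))

lemma integrable_norm_conjSchrodinger_sq (h : ℝ) (hφ : ∀ x ∈ tsupport u, ContDiffAt ℝ 2 φ x)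
    (hW : ∀ x ∈ tsupport u, ContinuousAt W x) (hu : ContDiff ℝ 2 u)
    (hsupp : HasCompactSupport u) : Integrable fun x ↦ ‖conjSchrodinger h φ W u x‖ ^ 2 := by
  refine integrable_of_continuousAt_of_support_subset hsupp.isCompact
    (isClosed_tsupport u) (fun x hx ↦ ?_) ?_
  · exact (continuousAt_conjSchrodinger h (hφ x hx) (hW x hx) hu.contDiffAt).norm.pow 2
  · exact fun x hx ↦ support_conjSchrodinger_subset h φ W u fun h0 ↦ hx (by simp [h0])

lemma integrable_norm_sq_add_norm_grad_sq (h : ℝ) (hu : ContDiff ℝ 1 u)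
    (hsupp : HasCompactSupport u) :
    Integrable fun x ↦ ‖u x‖ ^ 2 + h ^ 2 * ‖grad u x‖ ^ 2 := by
  refine integrable_of_continuousAt_of_support_subset hsupp.isCompact
    (isClosed_tsupport u) (fun x _ ↦ ?_) ?_
  · exact (hu.continuous.continuousAt.norm.pow 2).add (continuousAt_const.mul
      (contDiffAt_norm_grad_sq (m := 0) hu.contDiffAt (by norm_num)).continuousAt)
  · refine Function.support_subset_iff'.2 fun x hx ↦ ?_
    simp [grad_eq_zero_of_notMem_tsupport hx, image_eq_zero_of_notMem_tsupport hx]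

theorem carleman_estimate (hφ : ∀ x ∈ tsupport u, CarlemanWeightAt φ m δ M x) (hm : 0 ≤ m)
    (hδ : 0 ≤ δ) (hWx : ∀ x ∈ tsupport u, ContDiffAt ℝ 1 W x)
    (hW : ∀ x ∈ tsupport u, ‖grad W x‖ ≤ m * δ) (hκm : κ ≤ m) (hκδ : κ ≤ m * δ ^ 2) (hh : 0 < h)
    (hhM : h * M ≤ κ) (hu : ContDiff ℝ 2 u) (hsupp : HasCompactSupport u) :
    2 * κ * h * ∫ x, (‖u x‖ ^ 2 + h ^ 2 * ‖grad u x‖ ^ 2) ≤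
      ∫ x, ‖conjSchrodinger h φ W u x‖ ^ 2 := by
  have hflux := contDiff_flux h (fun x hx ↦ (hφ x hx).contDiffAt) hWx hu
  have hflux_supp (k : ι) : HasCompactSupport (flux h φ W u k) :=
    HasCompactSupport.of_support_subset_isCompact hsupp.isCompact (support_flux_subset h φ W u k)
  have hlhs := (integrable_norm_sq_add_norm_grad_sq h (hu.of_le one_le_two) hsupp).const_mul
    (2 * κ * h)
  have hdiv := (integrable_divergence hflux hflux_supp).const_mul 4
  calc 2 * κ * h * ∫ x, (‖u x‖ ^ 2 + h ^ 2 * ‖grad u x‖ ^ 2)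
      = ∫ x, (2 * κ * h * (‖u x‖ ^ 2 + h ^ 2 * ‖grad u x‖ ^ 2) +
          4 * divergence (flux h φ W u) x) := by
        rw [integral_add hlhs hdiv, integral_const_mul, integral_const_mul,
          integral_divergence_eq_zero hflux hflux_supp, mul_zero, add_zero]
    _ ≤ ∫ x, ‖conjSchrodinger h φ W u x‖ ^ 2 := by
        refine integral_mono (hlhs.add hdiv) (integrable_norm_conjSchrodinger_sq h
          (fun x hx ↦ (hφ x hx).contDiffAt.of_le (by norm_num))
          (fun x hx ↦ (hWx x hx).continuousAt) hu hsupp) fun x ↦ ?_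
        by_cases hx : x ∈ tsupport u
        · exact add_divergence_flux_le_norm_conjSchrodinger_sq (hφ x hx) hm hδ (hWx x hx) (hW x hx)
            hκm hκδ hh hhM hu.contDiffAt
        · have hx' (k : ι) : x ∉ tsupport (flux h φ W u k) := fun hmem ↦
            hx (closure_minimal (support_flux_subset h φ W u k) (isClosed_tsupport u) hmem)
          simp [divergence, partialDeriv_eq_zero_of_notMem_tsupport (hx' _),
            grad_eq_zero_of_notMem_tsupport hx, image_eq_zero_of_notMem_tsupport hx]

theorem exists_carleman_estimate_of_isCompact {K : Set (EuclideanSpace ℝ ι)} (hK : IsCompact K)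
    (hm : 0 < m) (hδ : 0 < δ) (hφ : ∀ x ∈ K, ContDiffAt ℝ 3 φ x)
    (hconvex : ∀ x ∈ K, ∀ s : EuclideanSpace ℝ ι, m * ‖s‖ ^ 2 ≤ hessianForm φ x s)
    (hgrad : ∀ x ∈ K, δ ≤ ‖grad φ x‖) :
    ∃ ε > (0 : ℝ), ∃ h₀ > (0 : ℝ), ∃ C > (0 : ℝ), ∀ W : EuclideanSpace ℝ ι → ℝ,
      (∀ x ∈ K, ContDiffAt ℝ 1 W x) → (∀ x ∈ K, ‖grad W x‖ ≤ ε) → ∀ h : ℝ, 0 < h → h ≤ h₀ →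
        ∀ u : EuclideanSpace ℝ ι → V, ContDiff ℝ 2 u → tsupport u ⊆ K →
          h * ∫ x, (‖u x‖ ^ 2 + h ^ 2 * ‖grad u x‖ ^ 2) ≤
            C * ∫ x, ‖conjSchrodinger h φ W u x‖ ^ 2 := by
  have hcont : ContinuousOn (grad (lap φ)) K := fun x hx ↦ by
    refine ContinuousAt.continuousWithinAt ((PiLp.continuous_toLp 2 _).continuousAt.comp ?_)
    refine continuousAt_pi.2 fun i ↦ ContDiffAt.continuousAt (𝕜 := ℝ) (n := 0) ?_
    exact contDiffAt_partialDeriv (contDiffAt_lap (m := 1) (hφ x hx) (by norm_num)) (by norm_num) i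
  obtain ⟨M, hM⟩ := hK.exists_bound_of_continuousOn hcont
  let κ := m * min 1 (δ ^ 2)
  have hκ : 0 < κ := by positivity
  have hκm : κ ≤ m := mul_le_of_le_one_right hm.le (min_le_left _ _)
  have hκδ : κ ≤ m * δ ^ 2 := mul_le_mul_of_nonneg_left (min_le_right _ _) hm.le
  refine ⟨m * δ, by positivity, κ / (|M| + 1), div_pos hκ (by positivity), 1 / (2 * κ),
    by positivity, ?_⟩
  intro W hWx hW h hh hh₀ u hu hsupp
  have hhM : h * M ≤ κ :=
    calc h * M ≤ h * (|M| + 1) := by gcongr; linarith [le_abs_self M]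
      _ ≤ κ := (le_div_iff₀ (by positivity)).1 hh₀
  have estimate := carleman_estimate
    (fun x hx ↦ ⟨hφ x (hsupp hx), hconvex x (hsupp hx), hgrad x (hsupp hx), hM x (hsupp hx)⟩)
    hm.le hδ.le (fun x hx ↦ hWx x (hsupp hx)) (fun x hx ↦ hW x (hsupp hx)) hκm hκδ hh hhM hu
    (hK.of_isClosed_subset (isClosed_tsupport u) hsupp)
  rw [one_div_mul_eq_div, le_div_iff₀ (by positivity)]
  linarith

end Integration

section RadialWeights

variable {m d₁ d₂ : ℝ} {g g' : ℝ → ℝ} {x : EuclideanSpace ℝ ι}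

lemma partialDeriv_norm (hx : x ≠ 0) (i : ι) : ∂[i] (fun y ↦ ‖y‖) x = x i / ‖x‖ := by
  have hsqrt := (hasStrictFDerivAt_norm_sq x).hasFDerivAt.sqrt
    (pow_ne_zero 2 (norm_ne_zero_iff.2 hx))
  simp only [Real.sqrt_sq (norm_nonneg _)] at hsqrt
  rw [partialDeriv, hsqrt.fderiv]
  simp only [smul_apply, coe_innerSL_apply, EuclideanSpace.inner_single_right, conj_trivial,
    one_mul, nsmul_eq_mul, Nat.cast_ofNat, smul_eq_mul]
  field_simp

lemma partialDeriv_comp_norm (hx : x ≠ 0) (hg : HasDerivAt g d₁ ‖x‖) (i : ι) :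
    ∂[i] (fun y ↦ g ‖y‖) x = d₁ * (x i / ‖x‖) := by
  have hnorm := (differentiableAt_id.norm ℝ hx).hasFDerivAt
  have hcomp : HasFDerivAt (fun y : EuclideanSpace ℝ ι ↦ g ‖y‖) _ x := hg.comp_hasFDerivAt x hnorm
  rw [← partialDeriv_norm hx, partialDeriv, hcomp.fderiv]
  rfl

lemma norm_grad_comp_norm (hx : x ≠ 0) (hg : HasDerivAt g d₁ ‖x‖) :
    ‖grad (fun y ↦ g ‖y‖) x‖ = |d₁| := by
  have grad_eq : grad (fun y ↦ g ‖y‖) x = (d₁ / ‖x‖) • x := by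
    ext i
    simp only [grad, partialDeriv_comp_norm hx hg, PiLp.smul_apply, smul_eq_mul]
    ring
  rw [grad_eq, norm_smul, norm_div, norm_norm, div_mul_cancel₀ _ (norm_ne_zero_iff.2 hx),
    Real.norm_eq_abs]

lemma partialDeriv_partialDeriv_comp_norm (hx : x ≠ 0)
    (hg : ∀ᶠ r in 𝓝 ‖x‖, HasDerivAt g (g' r) r) (hg' : HasDerivAt g' d₂ ‖x‖) (i j : ι) :
    ∂[i] (∂[j] (fun y ↦ g ‖y‖)) x = d₂ * (x i / ‖x‖ * (x j / ‖x‖)) +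
      g' ‖x‖ / ‖x‖ * ((if i = j then 1 else 0) - x i / ‖x‖ * (x j / ‖x‖)) := by
  have hr : ‖x‖ ≠ 0 := norm_ne_zero_iff.2 hx
  have first_order : ∂[j] (fun y ↦ g ‖y‖) =ᶠ[𝓝 x] fun y ↦ (g' ‖y‖ / ‖y‖) • y j := by
    filter_upwards [continuous_norm.continuousAt.eventually hg, eventually_ne_nhds hx] with y hy hy0
    rw [partialDeriv_comp_norm hy0 hy, smul_eq_mul, div_mul_eq_mul_div, mul_div_assoc]
  have hquot := hg'.fun_div (hasDerivAt_id' ‖x‖) hr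
  have hcoord : DifferentiableAt ℝ (fun y : EuclideanSpace ℝ ι ↦ y j) x :=
    (EuclideanSpace.proj j : EuclideanSpace ℝ ι →L[ℝ] ℝ).differentiableAt
  have hquot_norm : DifferentiableAt ℝ (fun y : EuclideanSpace ℝ ι ↦ g' ‖y‖ / ‖y‖) x :=
    hquot.differentiableAt.comp x (differentiableAt_id.norm ℝ hx)
  rw [partialDeriv, first_order.fderiv_eq, ← partialDeriv, partialDeriv_smul hquot_norm hcoord,
    partialDeriv_comp_norm hx hquot, partialDeriv_coord, smul_eq_mul, smul_eq_mul]
  field_simp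
  ring

lemma hessianForm_comp_norm (hx : x ≠ 0) (hg : ∀ᶠ r in 𝓝 ‖x‖, HasDerivAt g (g' r) r)
    (hg' : HasDerivAt g' d₂ ‖x‖) (s : EuclideanSpace ℝ ι) :
    hessianForm (fun y ↦ g ‖y‖) x s = d₂ * (⟪x, s⟫_ℝ / ‖x‖) ^ 2 +
      g' ‖x‖ / ‖x‖ * (‖s‖ ^ 2 - (⟪x, s⟫_ℝ / ‖x‖) ^ 2) := by
  have inner_sq : (⟪x, s⟫_ℝ / ‖x‖) ^ 2 =
      ∑ i, ∑ j, x i / ‖x‖ * (x j / ‖x‖) * (s i * s j) := by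
    rw [PiLp.inner_apply, Finset.sum_div, pow_two, Finset.sum_mul_sum]
    simp only [RCLike.inner_apply, conj_trivial]
    congr! 2
    ring
  have norm_sq : ‖s‖ ^ 2 = ∑ i, ∑ j, (if i = j then 1 else 0) * (s i * s j) := by
    simp [EuclideanSpace.real_norm_sq_eq, ← pow_two]
  rw [norm_sq, inner_sq, hessianForm]
  simp only [partialDeriv_partialDeriv_comp_norm hx hg hg', Finset.mul_sum,
    ← Finset.sum_sub_distrib, ← Finset.sum_add_distrib, RCLike.inner_apply, conj_trivial]
  congr! 2
  ring

lemma le_hessianForm_comp_norm (hx : x ≠ 0) (hg : ∀ᶠ r in 𝓝 ‖x‖, HasDerivAt g (g' r) r)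
    (hg' : HasDerivAt g' d₂ ‖x‖) (hm₁ : m ≤ g' ‖x‖ / ‖x‖) (hm₂ : m ≤ d₂)
    (s : EuclideanSpace ℝ ι) : m * ‖s‖ ^ 2 ≤ hessianForm (fun y ↦ g ‖y‖) x s := by
  have radial_le : (⟪x, s⟫_ℝ / ‖x‖) ^ 2 ≤ ‖s‖ ^ 2 := by
    rw [sq_le_sq, abs_norm, abs_div, abs_norm, div_le_iff₀ (norm_pos_iff.2 hx), mul_comm]
    exact abs_real_inner_le_norm x s
  rw [hessianForm_comp_norm hx hg hg']
  calc m * ‖s‖ ^ 2 = m * (⟪x, s⟫_ℝ / ‖x‖) ^ 2 + m * (‖s‖ ^ 2 - (⟪x, s⟫_ℝ / ‖x‖) ^ 2) := by ring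
    _ ≤ _ := by
      gcongr

lemma hasDerivAt_const_mul_exp (c r : ℝ) :
    HasDerivAt (fun r ↦ c * Real.exp r) (c * Real.exp r) r :=
  (Real.hasDerivAt_exp r).const_mul c

lemma le_hessianForm_const_mul_exp_norm {c : ℝ} (hc : 0 ≤ c) (hx : x ≠ 0)
    (s : EuclideanSpace ℝ ι) : c * ‖s‖ ^ 2 ≤ hessianForm (fun y ↦ c * Real.exp ‖y‖) x s := by
  refine le_hessianForm_comp_norm (g := fun r ↦ c * Real.exp r) hx
    (.of_forall (hasDerivAt_const_mul_exp c)) (hasDerivAt_const_mul_exp c _) ?_ ?_ s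
  · rw [le_div_iff₀ (norm_pos_iff.2 hx)]
    gcongr
    linarith [Real.add_one_le_exp ‖x‖]
  · exact le_mul_of_one_le_right hc (Real.one_le_exp (norm_nonneg x))

lemma le_norm_grad_const_mul_exp_norm {c : ℝ} (hc : 0 ≤ c) (hx : x ≠ 0) :
    c ≤ ‖grad (fun y ↦ c * Real.exp ‖y‖) x‖ := by
  rw [norm_grad_comp_norm (g := fun r ↦ c * Real.exp r) hx (hasDerivAt_const_mul_exp c _),
    abs_of_nonneg (by positivity)]
  exact le_mul_of_one_le_right hc (Real.one_le_exp (norm_nonneg x))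

end RadialWeights

variable (ι V) in
theorem stmt8_general {c r₁ : ℝ} (hc : 0 < c) (hr₁ : 0 < r₁) (r₂ : ℝ) :
    ∃ ε > (0 : ℝ), ∃ h₀ > (0 : ℝ), ∃ C > (0 : ℝ),
      ∀ W : EuclideanSpace ℝ ι → ℝ, ContDiff ℝ 1 W → (∀ x, ‖grad W x‖ ≤ ε) →
        ∀ h : ℝ, 0 < h → h ≤ h₀ →
          ∀ u : EuclideanSpace ℝ ι → V, ContDiff ℝ 2 u →
            tsupport u ⊆ ball 0 r₂ \ closedBall 0 r₁ →
            h * ∫ x, (‖u x‖ ^ 2 + h ^ 2 * ‖grad u x‖ ^ 2) ≤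
              C * ∫ x, ‖conjSchrodinger h (fun y ↦ c * Real.exp ‖y‖) W u x‖ ^ 2 := by
  let K : Set (EuclideanSpace ℝ ι) := closedBall 0 r₂ \ ball 0 r₁
  have hK : IsCompact K := (isCompact_closedBall 0 r₂).diff isOpen_ball
  have hK0 {x} (hx : x ∈ K) : x ≠ 0 := fun h0 ↦ hx.2 (h0 ▸ mem_ball_self hr₁)
  have hsmooth : ∀ x ∈ K, ContDiffAt ℝ 3 (fun y ↦ c * Real.exp ‖y‖) x := fun x hx ↦
    contDiffAt_const.mul (contDiffAt_norm ℝ (hK0 hx)).exp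
  obtain ⟨ε, hε, h₀, hh₀, C, hC, estimate⟩ := exists_carleman_estimate_of_isCompact (V := V)
    hK hc hc hsmooth (fun x hx ↦ le_hessianForm_const_mul_exp_norm hc.le (hK0 hx))
    (fun x hx ↦ le_norm_grad_const_mul_exp_norm hc.le (hK0 hx))
  refine ⟨ε, hε, h₀, hh₀, C, hC, fun W hW hWε h hh hhh₀ u hu hsupp ↦ ?_⟩
  exact estimate W (fun x _ ↦ hW.contDiffAt) (fun x _ ↦ hWε x) h hh hhh₀ u hu
    (hsupp.trans (sdiff_subset_sdiff ball_subset_closedBall ball_subset_closedBall))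

lemma gradSq_eq_norm_grad_sq (u : E2 → ℂ) (x : E2) : gradSq u x = ‖grad u x‖ ^ 2 :=
  (norm_grad_sq u x).symm

lemma gradNormR_eq_norm_grad (W : E2 → ℝ) (x : E2) : gradNormR W x = ‖grad W x‖ := by
  rw [EuclideanSpace.norm_eq]
  simp only [Real.norm_eq_abs, sq_abs]
  rfl

lemma opPW_eq_conjSchrodinger (h : ℝ) (φ W : E2 → ℝ) (u : E2 → ℂ) (x : E2) :
    opPW h φ W u x = conjSchrodinger h φ W u x := by
  simp only [conjSchrodinger, Complex.real_smul, Complex.ofReal_neg, Complex.ofReal_pow]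
  rfl

theorem stmt8 (r₁ r₂ : ℝ) (hr₁ : 0 < r₁) (hr₁₂ : r₁ < r₂) :
    ∃ c > (0 : ℝ), ∃ ε > (0 : ℝ), ∃ h₀ > (0 : ℝ), ∃ C > (0 : ℝ),
      ∀ W : E2 → ℝ, ContDiff ℝ 1 W →
        (∀ x : E2, |W x| ≤ ε) → (∀ x : E2, gradNormR W x ≤ ε) →
        ∀ h : ℝ, 0 < h → h ≤ h₀ →
          ∀ u : E2 → ℂ, ContDiff ℝ (⊤ : ℕ∞) u → HasCompactSupport u →
            tsupport u ⊆ ball (0 : E2) r₂ \ closedBall (0 : E2) r₁ →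
            h * ∫ x : E2, (‖u x‖ ^ 2 + h ^ 2 * gradSq u x) ≤
              C * ∫ x : E2, ‖opPW h (fun y => c * Real.exp ‖y‖) W u x‖ ^ 2 := by
  obtain ⟨ε, hε, h₀, hh₀, C, hC, estimate⟩ := stmt8_general (Fin 2) ℂ one_pos hr₁ r₂
  refine ⟨1, one_pos, ε, hε, h₀, hh₀, C, hC, fun W hW _ hWε h hh hhh₀ u hu _ hsupp ↦ ?_⟩
  simp only [gradNormR_eq_norm_grad, gradSq_eq_norm_grad_sq, opPW_eq_conjSchrodinger] at hWε ⊢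
  exact estimate W hW hWε h hh hhh₀ u (contDiff_infty.1 hu 2) hsupp
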